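/- Full rank of the Jacobian of 𝓗_{4n−1} for the canonical form (Part 2 of the proof of Proposition 4). Let θ = (θ_a, θ_b) ∈ R^n × R^n, x ∈ R^n, and v = (v_0, …, v_{4n−2}) ∈ R^{4n−1}. Assume the 2n×2n Hankel matrix 𝔐_{2n−1}(v) is invertible and the 2n×2n Sylvester matrix M(θ_a, θ_b) is invertible. Then the differential of (x, θ) ↦ 𝓗_{4n−1}(x, θ, v) at (x, θ) is injective: if (∂𝓗_{4n−1}/∂x)(x,θ,v) v_x + (∂𝓗_{4n−1}/∂θ)(x,θ,v) v_θ = 0 for some v_x ∈ R^n, v_θ ∈ R^{2n}, then v_x = 0 and v_θ = 0. -/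

import Mathlib

open scoped Matrix BigOperators

/-- The first basis row vector `e₁ᵀ = (1, 0, …, 0)`. -/
def e1 (n : ℕ) : Fin n → ℝ := fun j => if (j : ℕ) = 0 then 1 else 0

/-- Canonical SISO form : `A(θ_a)` has first column `−θ_a` and entries `(i, i+1)` equal
to `1`, all other entries `0`. -/
def Acan (n : ℕ) (θa : Fin n → ℝ) : Matrix (Fin n) (Fin n) ℝ :=
  fun i j => if (j : ℕ) = 0 then -θa i else if (j : ℕ) = (i : ℕ) + 1 then 1 else 0

/-- `H_r(θ)` : the `r × n` matrix stacking the rows `C A(θ_a)^{j-1}`, `j = 1,…,r`. -/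
def Hcan (n r : ℕ) (θa : Fin n → ℝ) : Matrix (Fin r) (Fin n) ℝ :=
  fun j => Matrix.vecMul (e1 n) (Acan n θa ^ (j : ℕ))

/-- The down-shift matrix `S ∈ ℝ^{r×r}`. -/
def shiftMat (r : ℕ) : Matrix (Fin r) (Fin r) ℝ :=
  fun i j => if (i : ℕ) = (j : ℕ) + 1 then 1 else 0

/-- `𝓗_r(x, θ, v) = H_r(θ) x + Σ_{j=1}^{r−1} S^j H_r(θ) B(θ_b) v_{j−1}` for the
canonical form. -/
def HHcan (n r : ℕ) (x θa θb : Fin n → ℝ) (v : Fin (r - 1) → ℝ) : Fin r → ℝ :=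
  Hcan n r θa *ᵥ x
    + ∑ j : Fin (r - 1), v j • ((shiftMat r ^ ((j : ℕ) + 1)) *ᵥ (Hcan n r θa *ᵥ θb))

/-- The `a × a` Hankel matrix of a vector `v ∈ ℝ^b` : entry `(i,j)` is `v_{i+j}`. -/
def hankelOf (a b : ℕ) (v : Fin b → ℝ) : Matrix (Fin a) (Fin a) ℝ :=
  fun i j => if h : (i : ℕ) + (j : ℕ) < b then v ⟨(i : ℕ) + (j : ℕ), h⟩ else 0

/-- The column `(θ_{bn}, θ_{b(n−1)}, …, θ_{b1}, 0, …, 0)ᵀ ∈ ℝ^{2n}`. -/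
def colB (n : ℕ) (θb : Fin n → ℝ) : Fin (2 * n) → ℝ :=
  fun i => if h : (i : ℕ) < n then θb ⟨n - 1 - (i : ℕ), by omega⟩ else 0

/-- The column `(θ_{an}, θ_{a(n−1)}, …, θ_{a1}, 1, 0, …, 0)ᵀ ∈ ℝ^{2n}`. -/
def colA (n : ℕ) (θa : Fin n → ℝ) : Fin (2 * n) → ℝ :=
  fun i => if h : (i : ℕ) < n then θa ⟨n - 1 - (i : ℕ), by omega⟩
    else if (i : ℕ) = n then 1 else 0

/-- The `2n × 2n` Sylvester (resultant) matrix. -/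
def sylvesterMat (n : ℕ) (θa θb : Fin n → ℝ) : Matrix (Fin (2 * n)) (Fin (2 * n)) ℝ :=
  fun i j =>
    if (j : ℕ) < n then
      (if h : (j : ℕ) ≤ (i : ℕ) then colB n θb ⟨(i : ℕ) - (j : ℕ), by have := i.2; omega⟩
        else 0)
    else
      (if h : (j : ℕ) - n ≤ (i : ℕ) then
        colA n θa ⟨(i : ℕ) - ((j : ℕ) - n), by have := i.2; omega⟩ else 0)

/-- Extension by zero. -/
def ex {n : ℕ} (u : Fin n → ℝ) (i : ℕ) : ℝ := if h : i < n then u ⟨i, h⟩ else 0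

lemma ex_lt {n : ℕ} (u : Fin n → ℝ) {i : ℕ} (h : i < n) : ex u i = u ⟨i, h⟩ := by simp [ex, h]
lemma ex_fin {n : ℕ} (u : Fin n → ℝ) (i : Fin n) : ex u i = u i := by simp [ex]
lemma ex_ge {n : ℕ} (u : Fin n → ℝ) {i : ℕ} (h : n ≤ i) : ex u i = 0 := by
  simp [ex, Nat.not_lt.mpr h]

lemma fsum {N : ℕ} (f : Fin N → ℝ) (g : ℕ → ℝ) (h : ∀ j : Fin N, f j = g j) :
    ∑ j, f j = ∑ j ∈ Finset.range N, g j := by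
  rw [← Fin.sum_univ_eq_sum_range]
  exact Finset.sum_congr rfl (fun j _ => h j)

/-- State recursion. -/
def XX (x a b w : ℕ → ℝ) : ℕ → ℕ → ℝ
  | 0, i => x i
  | k+1, i => -a i * XX x a b w k 0 + XX x a b w k (i+1) + b i * w k

lemma XX_ge (n : ℕ) (x a b w : ℕ → ℝ) (hx : ∀ i, n ≤ i → x i = 0)
    (ha : ∀ i, n ≤ i → a i = 0) (hb : ∀ i, n ≤ i → b i = 0) (k : ℕ) :
    ∀ i, n ≤ i → XX x a b w k i = 0 := by
  induction k with
  | zero => intro i hi; exact hx i hi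
  | succ k ih => intro i hi; simp [XX, ha i hi, hb i hi, ih (i+1) (by omega)]

lemma XX_out (x a b w : ℕ → ℝ) (m : ℕ) : ∀ k, XX x a b w (k+m) 0 = XX x a b w k m +
    ∑ i ∈ Finset.range m, (-a i * XX x a b w (k+m-1-i) 0 + b i * w (k+m-1-i)) := by
  induction m with
  | zero => intro k; simp
  | succ m ih =>
    intro k
    have h := ih (k+1)
    rw [show k + 1 + m = k + (m+1) by ring] at h
    rw [h, Finset.sum_range_succ, show k + (m+1) - 1 - m = k by omega]
    simp only [XX]
    ring

lemma Acan_mulVec (n : ℕ) (θa u : Fin n → ℝ) (i : Fin n) :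
    (Acan n θa *ᵥ u) i = - ex θa i * ex u 0 + ex u (i+1) := by
  have hn : 0 < n := by have := i.2; omega
  have h1 : ∀ j : Fin n, Acan n θa i j * u j =
      (if j = ⟨0, hn⟩ then - θa i * u j else 0) +
      (if (j:ℕ) = i + 1 then u j else 0) := by
    intro j
    simp only [Acan, Fin.ext_iff]
    by_cases h : (j:ℕ) = 0
    · simp [h]
    · simp [h]
  simp only [Matrix.mulVec, dotProduct]
  rw [Finset.sum_congr rfl (fun j _ => h1 j), Finset.sum_add_distrib]
  congr 1
  · simp [ex, hn]
  · by_cases h : (i:ℕ) + 1 < n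
    · rw [Finset.sum_eq_single ⟨i+1, h⟩]
      · simp [ex, h]
      · intro b _ hb
        rw [if_neg]; intro h'; exact hb (Fin.ext h')
      · simp
    · rw [ex_ge _ (by omega)]
      apply Finset.sum_eq_zero
      intro j _
      rw [if_neg]; have := j.2; omega

lemma shift_mulVec (r : ℕ) (u : Fin r → ℝ) (i : Fin r) :
    (shiftMat r *ᵥ u) i = if 1 ≤ (i:ℕ) then ex u (i-1) else 0 := by
  simp only [Matrix.mulVec, dotProduct, shiftMat]
  have := i.2
  by_cases h : 1 ≤ (i:ℕ)
  · rw [Finset.sum_eq_single ⟨i-1, by omega⟩]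
    · simp [ex, h, show (i:ℕ) - 1 < r by omega]
    · intro b _ hb
      rw [if_neg, zero_mul]; intro h'; apply hb; apply Fin.ext; simp; omega
    · simp
  · rw [if_neg h]
    apply Finset.sum_eq_zero
    intro j _
    rw [if_neg (by omega), zero_mul]

lemma shift_pow (r m : ℕ) (u : Fin r → ℝ) : ∀ (i : Fin r),
    ((shiftMat r ^ m) *ᵥ u) i = if m ≤ (i:ℕ) then ex u (i-m) else 0 := by
  induction m with
  | zero => intro i; simp [ex_fin]
  | succ m ih =>
    intro i
    rw [pow_succ', ← Matrix.mulVec_mulVec, shift_mulVec]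
    have := i.2
    by_cases h : 1 ≤ (i:ℕ)
    · rw [if_pos h, ex_lt _ (show (i:ℕ)-1 < r by omega), ih]
      simp only
      by_cases h2 : m + 1 ≤ (i:ℕ)
      · rw [if_pos h2, if_pos (by omega)]; congr 1; omega
      · rw [if_neg h2, if_neg (by omega)]
    · rw [if_neg h, if_neg (by omega)]

lemma e1_dot (n : ℕ) (u : Fin n → ℝ) : e1 n ⬝ᵥ u = ex u 0 := by
  simp only [dotProduct, e1]
  by_cases h : 0 < n
  · rw [Finset.sum_eq_single ⟨0, h⟩]
    · simp [ex, h]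
    · intro b _ hb
      rw [if_neg, zero_mul]; intro h'; exact hb (Fin.ext h')
    · simp
  · obtain rfl : n = 0 := by omega
    simp [ex]

lemma Hcan_mulVec (n r : ℕ) (θa u : Fin n → ℝ) (k : Fin r) :
    (Hcan n r θa *ᵥ u) k = e1 n ⬝ᵥ ((Acan n θa ^ (k:ℕ)) *ᵥ u) := by
  rw [Matrix.dotProduct_mulVec]; rfl

/-- State vector. -/
def xi (n : ℕ) (x θa θb : Fin n → ℝ) (w : ℕ → ℝ) (k : ℕ) : Fin n → ℝ :=
  (Acan n θa ^ k) *ᵥ x + ∑ j ∈ Finset.range k, w j • ((Acan n θa ^ (k-1-j)) *ᵥ θb)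

lemma xi_succ (n : ℕ) (x θa θb : Fin n → ℝ) (w : ℕ → ℝ) (k : ℕ) :
    xi n x θa θb w (k+1) = Acan n θa *ᵥ xi n x θa θb w k + w k • θb := by
  simp only [xi, Matrix.mulVec_add, Finset.sum_range_succ, Matrix.mulVec_mulVec, ← pow_succ',
    Matrix.mulVec_sum, Matrix.mulVec_smul]
  rw [add_assoc]
  congr 2
  · apply Finset.sum_congr rfl
    intro j hj
    have := Finset.mem_range.mp hj
    rw [show k + 1 - 1 - j = k - 1 - j + 1 by omega]
  · simp

lemma xi_eq (n : ℕ) (x θa θb : Fin n → ℝ) (w : ℕ → ℝ) (k : ℕ) :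
    ∀ i, ex (xi n x θa θb w k) i = XX (ex x) (ex θa) (ex θb) w k i := by
  induction k with
  | zero => intro i; simp [xi, XX]
  | succ k ih =>
    intro i
    by_cases h : i < n
    · rw [ex_lt _ h, xi_succ, Pi.add_apply, Acan_mulVec]
      simp only [XX, ih, Pi.smul_apply, smul_eq_mul]
      rw [ex_lt θb h]; ring
    · rw [ex_ge _ (by omega), XX_ge n]
      · intro i hi; exact ex_ge _ hi
      · intro i hi; exact ex_ge _ hi
      · intro i hi; exact ex_ge _ hi
      · omega

lemma HHcan_eq (n r : ℕ) (x θa θb : Fin n → ℝ) (v : Fin (r-1) → ℝ) (k : Fin r) :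
    HHcan n r x θa θb v k = XX (ex x) (ex θa) (ex θb) (ex v) k 0 := by
  rw [← xi_eq, ← e1_dot]
  have hk := k.2
  simp only [HHcan, xi, Pi.add_apply, dotProduct_add, Hcan_mulVec, Finset.sum_apply, Pi.smul_apply,
    smul_eq_mul, dotProduct_sum, dotProduct_smul, shift_pow]
  congr 1
  have : ∀ j : Fin (r-1), v j * (if (j:ℕ)+1 ≤ (k:ℕ) then ex (Hcan n r θa *ᵥ θb) (k - (j+1)) else 0)
      = (fun j : ℕ => if j < (k:ℕ) then ex v j * (e1 n ⬝ᵥ ((Acan n θa ^ ((k:ℕ)-1-j)) *ᵥ θb)) else 0) j := by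
    intro j
    simp only [ex_fin, Nat.succ_le_iff]
    split_ifs with h
    · rw [ex_lt _ (show (k:ℕ) - (j+1) < r by omega), Hcan_mulVec]
      simp only
      rw [show (k:ℕ) - (j+1) = k - 1 - j by omega]
    · simp
  rw [fsum _ (fun j : ℕ => if j < (k:ℕ) then ex v j * (e1 n ⬝ᵥ ((Acan n θa ^ ((k:ℕ)-1-j)) *ᵥ θb)) else 0) this, ← Finset.sum_filter]
  apply Finset.sum_congr _ (fun _ _ => rfl)
  ext j; simp; omega

lemma sum_shift (N j m : ℕ) (g c : ℕ → ℝ) (h : j + m ≤ N) (hc : ∀ l, m ≤ l → c l = 0) :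
    ∑ i ∈ Finset.range N, g i * (if j ≤ i then c (i-j) else 0) =
    ∑ l ∈ Finset.range m, g (j+l) * c l := by
  obtain ⟨r, rfl⟩ := Nat.exists_eq_add_of_le h
  rw [Finset.sum_range_add, Finset.sum_range_add, Finset.sum_eq_zero, zero_add,
    Finset.sum_eq_zero (s := Finset.range r), add_zero]
  · apply Finset.sum_congr rfl
    intro l _
    simp
  · intro l _
    rw [if_pos (by omega), hc _ (by omega), mul_zero]
  · intro i hi
    have := Finset.mem_range.mp hi
    rw [if_neg (by omega), mul_zero]

/-- Reversed coefficients. -/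
def rv (n : ℕ) (u : Fin n → ℝ) (l : ℕ) : ℝ := if l < n then ex u (n-1-l) else 0

lemma sylv_colB (n : ℕ) (θa θb : Fin n → ℝ) (g : ℕ → ℝ) (j : Fin (2*n)) (hj : (j:ℕ) < n) :
    ∑ i : Fin (2*n), g i * sylvesterMat n θa θb i j =
    ∑ l ∈ Finset.range n, g (j+l) * rv n θb l := by
  rw [← sum_shift (2*n) j n g (rv n θb) (by omega) (fun l hl => by simp [rv, Nat.not_lt.mpr hl]),
    ← Fin.sum_univ_eq_sum_range (fun i => g i * (if (j:ℕ) ≤ i then rv n θb (i-j) else 0))]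
  apply Finset.sum_congr rfl
  intro i _
  congr 1
  simp only [sylvesterMat, hj, if_true, colB, rv]
  split_ifs with h1 h2
  · rw [ex_lt]
  · rfl
  · rfl

lemma sylv_colA (n : ℕ) (θa θb : Fin n → ℝ) (g : ℕ → ℝ) (j : Fin (2*n)) (hj : ¬ (j:ℕ) < n) :
    ∑ i : Fin (2*n), g i * sylvesterMat n θa θb i j =
    (∑ l ∈ Finset.range n, g (j-n+l) * rv n θa l) + g j := by
  have hj2 := j.2
  have := sum_shift (2*n) (j-n) (n+1) g (fun l => if l = n then 1 else rv n θa l) (by omega)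
    (fun l hl => by
      simp only [rv]; rw [if_neg (by omega), if_neg (by omega)])
  rw [Finset.sum_range_succ, if_pos rfl, mul_one, show (j:ℕ)-n+n = j by omega,
    Finset.sum_congr (s₁ := Finset.range n) rfl (g := fun l => g (j-n+l) * rv n θa l)
      (fun l hl => by rw [if_neg (Finset.mem_range.mp hl).ne])] at this
  rw [← this, ← Fin.sum_univ_eq_sum_range (fun i => g i * (if (j:ℕ)-n ≤ i then
    (if i-(j-n) = n then 1 else rv n θa (i-(j-n))) else 0))]
  apply Finset.sum_congr rfl
  intro i _
  congr 1
  simp only [sylvesterMat, hj, if_false, colA, rv]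
  by_cases h1 : (j:ℕ) - n ≤ i
  · rw [dif_pos h1, if_pos h1]
    by_cases h2 : (i:ℕ) - (j-n) < n
    · rw [dif_pos h2, if_neg h2.ne, if_pos h2, ex_lt]
    · rw [dif_neg h2, if_neg h2]
  · rw [dif_neg h1, if_neg h1]

lemma rv_sum (n : ℕ) (u : Fin n → ℝ) (y : ℕ → ℝ) (k : ℕ) :
    ∑ i ∈ Finset.range n, ex u i * y (k+n-1-i) = ∑ l ∈ Finset.range n, rv n u l * y (k+l) := by
  rw [← Finset.sum_range_reflect]
  apply Finset.sum_congr rfl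
  intro l hl
  have := Finset.mem_range.mp hl
  rw [rv, if_pos this, show k + n - 1 - (n-1-l) = k+l by omega]

lemma core (n : ℕ) (θa θb da db : Fin n → ℝ) (v : Fin (4*n-1) → ℝ) (y : ℕ → ℝ)
    (hHankel : IsUnit (hankelOf (2 * n) (4 * n - 1) v).det)
    (hSylv : IsUnit (sylvesterMat n θa θb).det)
    (h1 : ∀ k, y (k+n) + ∑ l ∈ Finset.range n, rv n θa l * y (k+l) =
      ∑ l ∈ Finset.range n, rv n θb l * ex v (k+l))
    (h2 : ∀ k, k < 3*n → ∑ l ∈ Finset.range n, rv n da l * y (k+l) =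
      ∑ l ∈ Finset.range n, rv n db l * ex v (k+l)) : da = 0 ∧ db = 0 := by
  set z : Fin (2*n) → ℝ := fun j => if (j:ℕ) < n then rv n da j else - rv n db (j-n) with hz
  have key : hankelOf (2*n) (4*n-1) v *ᵥ (sylvesterMat n θa θb *ᵥ z) = 0 := by
    ext k
    have hk := k.2
    rw [Matrix.mulVec_mulVec]
    simp only [Matrix.mulVec, dotProduct, Matrix.mul_apply, Pi.zero_apply]
    have hh : ∀ j : Fin (2*n), (∑ i, hankelOf (2*n) (4*n-1) v k i * sylvesterMat n θa θb i j) * z j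
        = (fun j : ℕ => if j < n then
          rv n da j * (y (k+j+n) + ∑ l ∈ Finset.range n, rv n θa l * y (k+j+l))
          else - rv n db (j-n) * ((∑ l ∈ Finset.range n, rv n θa l * ex v (k+(j-n)+l))
            + ex v (k+j))) j := by
      intro j
      have hj := j.2
      have e : ∀ i : Fin (2*n), hankelOf (2*n) (4*n-1) v k i = (fun i : ℕ => ex v (k+i)) i := by
        intro i; rfl
      simp only [e]
      by_cases h : (j:ℕ) < n
      · rw [sylv_colB n θa θb (fun i => ex v (k+i)) j h]
        simp only [h, if_true, hz]
        rw [h1, mul_comm]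
        congr 1
        apply Finset.sum_congr rfl
        intro l _
        rw [mul_comm, add_assoc]
      · rw [sylv_colA n θa θb (fun i => ex v (k+i)) j h]
        simp only [h, if_false, hz]
        rw [mul_comm]
        congr 2
        apply Finset.sum_congr rfl
        intro l _
        rw [mul_comm, add_assoc]
    rw [fsum _ (fun j : ℕ => if j < n then
          rv n da j * (y (k+j+n) + ∑ l ∈ Finset.range n, rv n θa l * y (k+j+l))
          else - rv n db (j-n) * ((∑ l ∈ Finset.range n, rv n θa l * ex v (k+(j-n)+l))
            + ex v (k+j))) hh, show Finset.range (2*n) = Finset.range (n+n) by rw [two_mul],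
      Finset.sum_range_add]
    rw [Finset.sum_congr rfl (g := fun j => rv n da j * y (k+n+j) +
        ∑ l ∈ Finset.range n, rv n θa l * (rv n da j * y (k+l+j)))
      (fun j hj => by
        rw [if_pos (Finset.mem_range.mp hj), mul_add, Finset.mul_sum]
        congr 1
        · congr 2; ring
        · apply Finset.sum_congr rfl
          intro l _
          rw [show (k:ℕ)+j+l = k+l+j by ring]; ring)]
    rw [Finset.sum_congr (s₁ := Finset.range n) (s₂ := Finset.range n)
      (f := fun x => if n + x < n then _ else _) rfl
      (g := fun j => - (rv n db j * ex v (k+n+j) +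
        ∑ l ∈ Finset.range n, rv n θa l * (rv n db j * ex v (k+l+j))))
      (fun j hj => by
        rw [if_neg (by omega), Nat.add_sub_cancel_left, mul_add, Finset.mul_sum, neg_add, add_comm]
        congr 1
        · rw [neg_mul, add_assoc]
        · rw [← Finset.sum_neg_distrib]
          apply Finset.sum_congr rfl
          intro l _
          rw [show (k:ℕ)+j+l = k+l+j by ring]; ring)]
    rw [Finset.sum_neg_distrib, Finset.sum_add_distrib, Finset.sum_add_distrib, Finset.sum_comm,
      Finset.sum_comm (f := fun j l => rv n θa l * (rv n db j * ex v (k+l+j)))]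
    simp only [← Finset.mul_sum]
    rw [h2 (k+n) (by omega), add_neg_eq_zero]
    congr 1
    apply Finset.sum_congr rfl
    intro l hl
    rw [h2 (k+l) (by have := Finset.mem_range.mp hl; omega)]
  have k1 := Matrix.eq_zero_of_mulVec_eq_zero hHankel.ne_zero key
  have k2 := Matrix.eq_zero_of_mulVec_eq_zero hSylv.ne_zero k1
  constructor
  · ext i
    have hi := i.2
    have := congrFun k2 ⟨n-1-i, by omega⟩
    simp only [hz, Pi.zero_apply] at this
    rw [if_pos (by omega), rv, if_pos (by omega), show n-1-(n-1-(i:ℕ)) = i by omega, ex_fin] at this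
    exact this
  · ext i
    have hi := i.2
    have := congrFun k2 ⟨n+(n-1-i), by omega⟩
    simp only [hz, Pi.zero_apply] at this
    rw [if_neg (by omega), Nat.add_sub_cancel_left, rv, if_pos (by omega),
      show n-1-(n-1-(i:ℕ)) = i by omega, ex_fin, neg_eq_zero] at this
    exact this

lemma ex_line {n : ℕ} (u d : Fin n → ℝ) (i : ℕ) (t : ℝ) :
    ex (u + t • d) i = ex u i + t * ex d i := by
  by_cases h : i < n <;> simp [ex, h]

lemma ex_hasDeriv {n : ℕ} (u d : Fin n → ℝ) (i : ℕ) (t : ℝ) :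
    HasDerivAt (fun t : ℝ => ex (u + t • d) i) (ex d i) t := by
  simp only [ex_line]
  simpa using ((hasDerivAt_id t).mul_const (ex d i)).const_add (ex u i)

lemma ex_diff {E : Type*} [NormedAddCommGroup E] [NormedSpace ℝ E] {n : ℕ} (f : E → Fin n → ℝ)
    (hf : Differentiable ℝ f) (i : ℕ) : Differentiable ℝ (fun p => ex (f p) i) := by
  by_cases h : i < n
  · simp only [ex, h, dif_pos]
    exact differentiable_pi.mp hf _
  · simp [ex, h]

lemma XX_diff {E : Type*} [NormedAddCommGroup E] [NormedSpace ℝ E] {n : ℕ} (f g h : E → Fin n → ℝ)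
    (hf : Differentiable ℝ f) (hg : Differentiable ℝ g) (hh : Differentiable ℝ h) (w : ℕ → ℝ)
    (k : ℕ) : ∀ i, Differentiable ℝ (fun p => XX (ex (f p)) (ex (g p)) (ex (h p)) w k i) := by
  induction k with
  | zero => intro i; exact ex_diff f hf i
  | succ k ih =>
    intro i
    simp only [XX]
    exact (((ex_diff g hg i).neg.mul (ih 0)).add (ih (i+1))).add
      ((ex_diff h hh i).mul_const _)

/-- full rank of the Jacobian of `𝓗` for the canonical form ;
Part 2 of the proof of Proposition 4: the differential of
`(x, θ) ↦ 𝓗(x, θ, v)` is injective. -/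
theorem jacobian_full_rank_canonical
    (n : ℕ) (hn : 0 < n)
    (θa θb x : Fin n → ℝ) (v : Fin (4 * n - 1) → ℝ)
    (hHankel : IsUnit (hankelOf (2 * n) (4 * n - 1) v).det)
    (hSylv : IsUnit (sylvesterMat n θa θb).det) :
    ∀ (vx vθa vθb : Fin n → ℝ),
      fderiv ℝ (fun p : (Fin n → ℝ) × (Fin n → ℝ) × (Fin n → ℝ) =>
          HHcan n (4 * n) p.1 p.2.1 p.2.2 v) (x, θa, θb) (vx, vθa, vθb) = 0 →
      vx = 0 ∧ vθa = 0 ∧ vθb = 0 := by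
  intro vx va vb hD
  set F : (Fin n → ℝ) × (Fin n → ℝ) × (Fin n → ℝ) → Fin (4*n) → ℝ :=
    fun p => HHcan n (4 * n) p.1 p.2.1 p.2.2 v with hF
  have hFd : Differentiable ℝ F := by
    rw [differentiable_pi]
    intro k
    simp only [hF, HHcan_eq]
    exact XX_diff _ _ _ (by fun_prop) (by fun_prop) (by fun_prop) _ _ _
  set Y : ℕ → ℝ → ℝ := fun k t =>
    XX (ex (x + t • vx)) (ex (θa + t • va)) (ex (θb + t • vb)) (ex v) k 0 with hY
  have hYd : ∀ k, k < 4*n → HasDerivAt (Y k) 0 0 := by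
    intro k hk
    have hl : HasDerivAt (fun t : ℝ => (x, θa, θb) + t • (vx, va, vb)) (vx, va, vb) 0 := by
      simpa using ((hasDerivAt_id (0:ℝ)).smul_const (vx, va, vb)).const_add (x, θa, θb)
    have h0 : HasFDerivAt F (fderiv ℝ F (x, θa, θb)) ((x, θa, θb) + (0:ℝ) • (vx, va, vb)) := by
      rw [zero_smul, add_zero]; exact (hFd _).hasFDerivAt
    have h1 := h0.comp_hasDerivAt (0:ℝ) hl
    rw [hD] at h1
    have h2 := hasDerivAt_pi.mp h1 ⟨k, hk⟩
    have h3 : Y k = fun t : ℝ => (F ∘ fun t : ℝ => (x, θa, θb) + t • (vx, va, vb)) t ⟨k, hk⟩ := by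
      funext t
      simp only [hY, hF, Function.comp, HHcan_eq]
      rfl
    rw [h3]
    exact h2
  have hrec : ∀ m k, k + m < 4*n → HasDerivAt (fun t =>
      Y (k+m) t + ∑ i ∈ Finset.range m, (ex (θa + t • va) i * Y (k+m-1-i) t
        - ex (θb + t • vb) i * ex v (k+m-1-i)))
      (∑ i ∈ Finset.range m, (ex va i * Y (k+m-1-i) 0 - ex vb i * ex v (k+m-1-i))) 0 := by
    intro m k hk
    have hs : HasDerivAt (fun t => ∑ i ∈ Finset.range m, (ex (θa + t • va) i * Y (k+m-1-i) t
        - ex (θb + t • vb) i * ex v (k+m-1-i)))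
      (∑ i ∈ Finset.range m, (ex va i * Y (k+m-1-i) 0 - ex vb i * ex v (k+m-1-i))) 0 := by
      apply HasDerivAt.fun_sum
      intro i _
      have := ((ex_hasDeriv θa va i 0).mul (hYd (k+m-1-i) (by omega))).sub
        ((ex_hasDeriv θb vb i 0).mul_const (ex v (k+m-1-i)))
      rw [mul_zero, add_zero] at this
      exact this
    have := (hYd (k+m) hk).add hs
    rw [zero_add] at this
    exact this
  have hid : ∀ m k, ∀ t, Y (k+m) t + ∑ i ∈ Finset.range m, (ex (θa + t • va) i * Y (k+m-1-i) t
        - ex (θb + t • vb) i * ex v (k+m-1-i)) =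
      XX (ex (x + t • vx)) (ex (θa + t • va)) (ex (θb + t • vb)) (ex v) k m := by
    intro m k t
    have := XX_out (ex (x + t • vx)) (ex (θa + t • va)) (ex (θb + t • vb)) (ex v) m k
    simp only [hY]
    rw [this, add_assoc, ← Finset.sum_add_distrib, Finset.sum_eq_zero, add_zero]
    intro i _; ring
  have hge : ∀ (k : ℕ) (t : ℝ), XX (ex (x + t • vx)) (ex (θa + t • va)) (ex (θb + t • vb)) (ex v) k n = 0 := by
    intro k t
    exact XX_ge n _ _ _ _ (fun i hi => ex_ge _ hi) (fun i hi => ex_ge _ hi)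
      (fun i hi => ex_ge _ hi) k n le_rfl
  have hab := core n θa θb va vb v (fun k => Y k 0) hHankel hSylv
    (by
      intro k
      have := hid n k 0
      rw [hge, Finset.sum_sub_distrib, zero_smul, zero_smul, add_zero, add_zero,
        rv_sum n θa (fun k => Y k 0), rv_sum n θb (ex v)] at this
      linarith)
    (by
      intro k hk
      have h1 := hrec n k (by omega)
      simp only [hid, hge] at h1
      have h2 := h1.unique (hasDerivAt_const _ _)
      rw [Finset.sum_sub_distrib, rv_sum n va (fun k => Y k 0), rv_sum n vb (ex v)] at h2
      linarith)
  refine ⟨?_, hab⟩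
  obtain ⟨rfl, rfl⟩ := hab
  ext i
  have h1 := hrec i 0 (by omega)
  simp only [hid] at h1
  have h2 := h1.unique (ex_hasDeriv x vx i 0)
  rw [ex_fin] at h2
  rw [← h2]
  apply Finset.sum_eq_zero
  intro j _
  simp [ex]
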